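/- arXiv:2002.11366 — 2 statements merged into one kernel-verified Lean document; each statement's English description precedes it below -/
import Mathlib

section
/- Let p be a prime with p > 3 and p ≡ 3 (mod 4), and let n be a positive integer with n ≡ 1 (mod 4). If positive integers x, y, z satisfy (5pn² − 1)^x + (p(p−5)n² + 1)^y = (pn)^z, then z is even. -/
/-!
Write the equation as `A ^ x + B ^ y = C ^ z`. Since `A + B = C ^ 2` and `B ≡ 1 (mod C)`, modulo `B`
we have `A ≡ C ^ 2` with `C` a unit and `C ^ z ≡ A ^ x`, so `J(C | B) ^ z = J(A | B) ^ x = 1`.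
As `B ≡ C ≡ 3 (mod 4)`, quadratic reciprocity gives `J(C | B) = -J(B | C) = -J(1 | C) = -1`.
-/

open scoped NumberTheorySymbols

theorem jacobiSym_pow_eq_of_pow_add_pow_eq_pow {a c : ℤ} {b x y z : ℕ} (hy : y ≠ 0)
    (h : a ^ x + (b : ℤ) ^ y = c ^ z) : J(a | b) ^ x = J(c | b) ^ z := by
  have h_modEq : a ^ x ≡ c ^ z [ZMOD b] := by
    rw [Int.modEq_iff_dvd, ← h, add_sub_cancel_left]
    exact dvd_pow_self _ hy
  rw [← jacobiSym.pow_left, ← jacobiSym.pow_left]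
  exact jacobiSym.mod_left' h_modEq

theorem even_of_pow_add_pow_eq_pow_of_jacobiSym {a c : ℤ} {b x y z : ℕ} (hy : y ≠ 0)
    (ha : J(a | b) = 1) (hc : J(c | b) = -1) (h : a ^ x + (b : ℤ) ^ y = c ^ z) : Even z := by
  have h_pow := jacobiSym_pow_eq_of_pow_add_pow_eq_pow hy h
  rw [ha, hc, one_pow] at h_pow
  exact (neg_one_pow_eq_one_iff_even (by decide)).mp h_pow.symm

theorem jacobiSym_eq_one_of_modEq_sq {a r : ℤ} {b : ℕ} (hr : r.gcd b = 1)
    (ha : a ≡ r ^ 2 [ZMOD b]) : J(a | b) = 1 :=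
  (jacobiSym.mod_left' ha).trans (jacobiSym.sq_one' hr)

theorem jacobiSym_eq_neg_one_of_modEq_one {b c : ℕ} (hb : b % 4 = 3) (hc : c % 4 = 3)
    (hbc : b ≡ 1 [MOD c]) : J(c | b) = -1 := by
  have hbc' : (b : ℤ) ≡ 1 [ZMOD c] := mod_cast Int.natCast_modEq_iff.mpr hbc
  rw [jacobiSym.quadratic_reciprocity_three_mod_four hc hb, jacobiSym.mod_left' hbc',
    jacobiSym.one_left]

theorem even_of_pow_add_pow_eq_pow_of_modEq_sq {a : ℤ} {b c x y z : ℕ} (hy : y ≠ 0)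
    (ha : a ≡ (c : ℤ) ^ 2 [ZMOD b]) (hb : b % 4 = 3) (hc : c % 4 = 3) (hbc : b ≡ 1 [MOD c])
    (h : a ^ x + (b : ℤ) ^ y = (c : ℤ) ^ z) : Even z := by
  have h_coprime : (c : ℤ).gcd b = 1 := by
    rw [Int.gcd_natCast_natCast, Nat.gcd_comm, hbc.gcd_eq, Nat.gcd_one_left]
  exact even_of_pow_add_pow_eq_pow_of_jacobiSym hy (jacobiSym_eq_one_of_modEq_sq h_coprime ha)
    (jacobiSym_eq_neg_one_of_modEq_one hb hc hbc) h

theorem mul_sub_mul_sq_add_one_mod_four {k p n : ℕ} (hkp : k ≤ p) (hk : k % 4 = 1)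
    (hp : p % 4 = 3) (hn : Odd n) : (p * (p - k) * n ^ 2 + 1) % 4 = 3 := by
  have h_sub : (p - k) % 4 = 2 := by omega
  have h_sq : n ^ 2 % 4 = 1 := mod_cast Int.sq_mod_four_eq_one_of_odd hn.natCast
  simp [Nat.add_mod, Nat.mul_mod, hp, h_sub, h_sq]

theorem mul_mul_sq_sub_one_add_mul_sub_mul_sq_add_one {k p n : ℕ} (hk : 0 < k) (hkp : k ≤ p)
    (hn : 0 < n) : (k * p * n ^ 2 - 1) + (p * (p - k) * n ^ 2 + 1) = (p * n) ^ 2 := by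
  have h_pos : 0 < k * p * n ^ 2 := mul_pos (mul_pos hk (hk.trans_le hkp)) (pow_pos hn 2)
  calc (k * p * n ^ 2 - 1) + (p * (p - k) * n ^ 2 + 1)
      = k * p * n ^ 2 + p * (p - k) * n ^ 2 := by omega
    _ = (k + (p - k)) * (p * n ^ 2) := by ring
    _ = (p * n) ^ 2 := by rw [Nat.add_sub_cancel' hkp]; ring

theorem mul_mul_sq_add_one_modEq_one (p m n : ℕ) : p * m * n ^ 2 + 1 ≡ 1 [MOD p * n] := by
  have h_dvd : p * n ∣ p * m * n ^ 2 := ⟨m * n, by ring⟩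
  simpa using (Nat.modEq_zero_iff_dvd.mpr h_dvd).add_right 1

theorem stmt_7_general (k p n : ℕ) (hkp : k ≤ p) (hk4 : k % 4 = 1) (hp4 : p % 4 = 3)
    (hn4 : n % 4 = 1) (x y z : ℕ) (hy : 0 < y)
    (heq : (k * p * n ^ 2 - 1) ^ x + (p * (p - k) * n ^ 2 + 1) ^ y = (p * n) ^ z) :
    Even z := by
  have h_sum : (k * p * n ^ 2 - 1) + (p * (p - k) * n ^ 2 + 1) = (p * n) ^ 2 :=
    mul_mul_sq_sub_one_add_mul_sub_mul_sq_add_one (by omega) hkp (by omega)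
  have h_sq : ((k * p * n ^ 2 - 1 : ℕ) : ℤ) ≡ (p * n : ℕ) ^ 2
      [ZMOD (p * (p - k) * n ^ 2 + 1 : ℕ)] := by
    rw [← Nat.cast_pow, Int.natCast_modEq_iff, ← h_sum]
    exact Nat.add_modEq_right.symm
  have hB4 : (p * (p - k) * n ^ 2 + 1) % 4 = 3 :=
    mul_sub_mul_sq_add_one_mod_four hkp hk4 hp4 (Nat.odd_iff.mpr (by omega))
  have hC4 : p * n % 4 = 3 := by simp [Nat.mul_mod, hp4, hn4]
  exact even_of_pow_add_pow_eq_pow_of_modEq_sq hy.ne' h_sq hB4 hC4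
    (mul_mul_sq_add_one_modEq_one p (p - k) n) (mod_cast heq)

theorem stmt_7 (p n : ℕ) (hp : p.Prime) (hp3 : 3 < p) (hp4 : p % 4 = 3)
    (hn : 0 < n) (hn4 : n % 4 = 1)
    (x y z : ℕ) (hx : 0 < x) (hy : 0 < y) (hz : 0 < z)
    (heq : (5 * p * n ^ 2 - 1) ^ x + (p * (p - 5) * n ^ 2 + 1) ^ y = (p * n) ^ z) :
    Even z :=
  stmt_7_general 5 p n (by omega) rfl hp4 hn4 x y z hy heq
end

section
/- Let n be a positive integer. If positive integers x, y, z with x odd and z ≥ 4 satisfy (35n² − 1)^x + (14n² + 1)^y = (7n)^z, then n² divides 35x + 14y. -/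
/-!
Modulo `m ^ 2` the binomial theorem is linear in `m`: `(b * m + 1) ^ y ≡ 1 + m * (b * y)`, and
`(a * m - 1) ^ x ≡ -1 + m * (a * x)` for odd `x`. The constant terms cancel in the sum, leaving
`m * (a * x + b * y)`. For `m = n ^ 2` and `z ≥ 4` the power `(c * n) ^ z` vanishes modulo
`m ^ 2 = n ^ 4`, so one factor `m` can be cancelled.
-/

section CommRing

variable {R : Type*} [CommRing R]

theorem sq_dvd_mul_add_one_pow_sub (b m : R) (y : ℕ) :
    m ^ 2 ∣ (b * m + 1) ^ y - (1 + m * (b * y)) := by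
  have h : m ^ 2 ∣ (1 + b * m) ^ y - 1 ^ (y - 1) * (b * m) * y - 1 ^ y :=
    (pow_dvd_pow_of_dvd (dvd_mul_left m b) 2).trans (sq_dvd_add_pow_sub_sub (b * m) 1 y)
  rw [one_pow, one_pow] at h
  convert h using 1
  ring

theorem sq_dvd_mul_sub_one_pow_sub_of_odd (a m : R) {x : ℕ} (hx : Odd x) :
    m ^ 2 ∣ (a * m - 1) ^ x - (-1 + m * (a * x)) := by
  have hneg : (a * m - 1) ^ x = -(-a * m + 1) ^ x := by
    rw [← hx.neg_pow]
    ring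
  rw [hneg, ← dvd_neg]
  convert sq_dvd_mul_add_one_pow_sub (-a) m x using 1
  ring

theorem sq_dvd_mul_sub_one_pow_add_mul_add_one_pow_sub (a b m : R) {x : ℕ} (hx : Odd x) (y : ℕ) :
    m ^ 2 ∣ (a * m - 1) ^ x + (b * m + 1) ^ y - m * (a * x + b * y) := by
  convert (sq_dvd_mul_sub_one_pow_sub_of_odd a m hx).add (sq_dvd_mul_add_one_pow_sub b m y) using 1
  ring

theorem sq_dvd_mul_sub_one_pow_add_mul_add_one_pow_iff [IsCancelMulZero R] {a b m : R} (hm : m ≠ 0)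
    {x y : ℕ} (hx : Odd x) :
    m ^ 2 ∣ (a * m - 1) ^ x + (b * m + 1) ^ y ↔ m ∣ a * x + b * y := by
  rw [dvd_iff_dvd_of_dvd_sub (sq_dvd_mul_sub_one_pow_add_mul_add_one_pow_sub a b m hx y), sq,
    mul_dvd_mul_iff_left hm]

theorem stmt_15_general [IsCancelMulZero R] {a b c n : R} (hn : n ≠ 0) {x y z : ℕ} (hx : Odd x)
    (hz : 4 ≤ z) (heq : (a * n ^ 2 - 1) ^ x + (b * n ^ 2 + 1) ^ y = (c * n) ^ z) :
    n ^ 2 ∣ a * x + b * y := by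
  rw [← sq_dvd_mul_sub_one_pow_add_mul_add_one_pow_iff (pow_ne_zero 2 hn) hx, heq, ← pow_mul]
  exact (pow_dvd_pow n hz).trans (pow_dvd_pow_of_dvd (dvd_mul_left n c) z)

end CommRing

theorem stmt_15 (n : ℕ) (hn : 0 < n)
    (x y z : ℕ) (hx : 0 < x) (hxodd : Odd x) (hy : 0 < y) (hz : 4 ≤ z)
    (heq : (35 * n ^ 2 - 1) ^ x + (14 * n ^ 2 + 1) ^ y = (7 * n) ^ z) :
    n ^ 2 ∣ 35 * x + 14 * y := by
  have hpos : 1 ≤ 35 * n ^ 2 := Nat.succ_le_of_lt (by positivity)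
  zify [hpos] at heq ⊢
  exact stmt_15_general (Nat.cast_ne_zero.mpr hn.ne') hxodd hz heq
end
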